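/- Let n ≥ 2 be an integer and let A ∈ C_n with rank A = n² − 1. Then the face F(A) of C_n generated by A has dimension exactly n⁴ − 3n² + 1. -/

import Mathlib

open Matrix
open scoped ComplexOrder

noncomputable section

/-- `Cset n` is the set of n²×n² complex positive semidefinite matrices, written in block
form with blocks indexed by pairs `(i,k)` (block row `i`, inner row `k`), whose `(i,j)`
blocks have trace `δ_{ij}`.  It corresponds to the set of quantum channels via the Choi
matrix. -/
def Cset (n : ℕ) : Set (Matrix (Fin n × Fin n) (Fin n × Fin n) ℂ) :=
  {A | A.PosSemidef ∧
    ∀ i j : Fin n, ∑ k : Fin n, A (i, k) (j, k) = if i = j then 1 else 0}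

/-- `F` is a face of the convex set `C`: a convex subset such that whenever a point of `F`
lies in the open segment between two points of `C`, both endpoints lie in `F`. -/
def IsFace {V : Type*} [AddCommGroup V] [Module ℝ V] (C F : Set V) : Prop :=
  F ⊆ C ∧ Convex ℝ F ∧
    ∀ x ∈ C, ∀ y ∈ C, ∀ t : ℝ, 0 < t → t < 1 → t • x + (1 - t) • y ∈ F → x ∈ F ∧ y ∈ F

/-- The face of `C` generated by `A`: the smallest face of `C` containing `A`. -/
def faceGen {V : Type*} [AddCommGroup V] [Module ℝ V] (C : Set V) (A : V) : Set V :=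
  ⋂₀ {F : Set V | IsFace C F ∧ A ∈ F}

/-- The dimension of a face: the dimension of its affine hull as a real affine subspace. -/
def faceDim {V : Type*} [AddCommGroup V] [Module ℝ V] (F : Set V) : ℕ :=
  Module.finrank ℝ ↥(vectorSpan ℝ F)

/-! The directions of the face generated by `A` in a section `{B ≥ 0 | L B = b}` of the positive
semidefinite cone are the Hermitian `H` with `ker A ⊆ ker H` and `L H = 0`: such an `H` lives on
the range of `A`, where `A` is positive definite, so `A ± ε H` stays positive semidefinite for
small `ε`. Compressing to the range of `A`, the first condition alone leaves a space of dimension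
`(rank A)²`.

For `C_n`, `L` is the partial trace. As soon as `dim ker A < n`, every `u` has a `y ≠ 0` with
`u ⊗ y` orthogonal to `ker A`, and the partial trace of `(u ⊗ y)(u ⊗ y)*` is a positive multiple of
`u u*`. So `L` maps onto all Hermitian `n × n` matrices and costs exactly `n²` dimensions. -/

section FiniteDimensional

lemma finrank_map_add_finrank_inf_ker {K V W : Type*} [DivisionRing K] [AddCommGroup V]
    [Module K V] [FiniteDimensional K V] [AddCommGroup W] [Module K W]
    (p : Submodule K V) (f : V →ₗ[K] W) :
    Module.finrank K (p.map f) + Module.finrank K ↥(p ⊓ LinearMap.ker f) =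
      Module.finrank K p := by
  rw [← Submodule.map_comap_subtype, Submodule.finrank_map_subtype_eq, ← LinearMap.ker_domRestrict,
    ← LinearMap.range_domRestrict, LinearMap.finrank_range_add_finrank_ker]

lemma finrank_selfAdjoint (V : Type*) [AddCommGroup V] [Module ℂ V] [StarAddMonoid V]
    [StarModule ℂ V] [FiniteDimensional ℂ V] :
    Module.finrank ℝ (selfAdjoint.submodule ℝ V) = Module.finrank ℂ V := by
  have : FiniteDimensional ℝ V := FiniteDimensional.complexToReal V
  have range_eq : LinearMap.range (imaginaryPart (A := V)) = ⊤ :=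
    LinearMap.range_eq_top.2 fun a => ⟨Complex.I • (a : V), by simp⟩
  have ker_eq : LinearMap.ker (imaginaryPart (A := V)) = selfAdjoint.submodule ℝ V := by
    ext a
    refine ⟨fun ha => ?_, IsSelfAdjoint.imaginaryPart⟩
    rw [← realPart_add_I_smul_imaginaryPart a, LinearMap.mem_ker.1 ha]
    simp only [ZeroMemClass.coe_zero, smul_zero, add_zero]
    exact (realPart a).2
  have rank_nullity := LinearMap.finrank_range_add_finrank_ker (imaginaryPart (A := V))
  rw [range_eq, finrank_top, ker_eq, finrank_real_of_complex] at rank_nullity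
  change Module.finrank ℝ (selfAdjoint.submodule ℝ V) + _ = _ at rank_nullity
  lia

end FiniteDimensional

section Face

variable {V : Type*} [AddCommGroup V] [Module ℝ V] {C F : Set V} {x h : V}

lemma self_mem_faceGen (C : Set V) (x : V) : x ∈ faceGen C x :=
  fun _ hF => hF.2

lemma faceGen_subset (hF : IsFace C F) (hx : x ∈ F) : faceGen C x ⊆ F :=
  Set.sInter_subset_of_mem ⟨hF, hx⟩

lemma add_mem_faceGen (hadd : x + h ∈ C) (hsub : x - h ∈ C) : x + h ∈ faceGen C x := by
  rintro F ⟨⟨-, -, hF⟩, hxF⟩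
  refine (hF _ hadd _ hsub (1 / 2) (by norm_num) (by norm_num) ?_).1
  convert hxF using 1
  module

lemma mem_vectorSpan_faceGen {ε : ℝ} (hε : ε ≠ 0) (hadd : x + ε • h ∈ C) (hsub : x - ε • h ∈ C) :
    h ∈ vectorSpan ℝ (faceGen C x) := by
  have hdiff := vsub_mem_vectorSpan ℝ (add_mem_faceGen hadd hsub) (self_mem_faceGen C x)
  rw [vsub_eq_sub, add_sub_cancel_left] at hdiff
  exact (Submodule.smul_mem_iff _ hε).1 hdiff

end Face

section Perturbation

lemma exists_pos_nonneg_add_smul_and_nonneg_sub_smul {𝒜 : Type*} [CStarAlgebra 𝒜] [PartialOrder 𝒜]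
    [StarOrderedRing 𝒜] {a h : 𝒜} (ha : IsStrictlyPositive a) (hh : IsSelfAdjoint h) :
    ∃ ε : ℝ, 0 < ε ∧ 0 ≤ a + ε • h ∧ 0 ≤ a - ε • h := by
  rcases subsingleton_or_nontrivial 𝒜 with _ | _
  · exact ⟨1, one_pos, (Subsingleton.elim _ _).le, (Subsingleton.elim _ _).le⟩
  obtain ⟨r, hr, hra⟩ : ∃ r > 0, algebraMap ℝ 𝒜 r ≤ a :=
    (CFC.exists_pos_algebraMap_le_iff ha.isSelfAdjoint).2 fun _ hx => ha.spectrum_pos hx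
  set ε : ℝ := r / (‖h‖ + 1)
  have hε : 0 < ε := by positivity
  have hεr : ε * ‖h‖ ≤ r := by
    rw [div_mul_eq_mul_div, div_le_iff₀ (by positivity)]
    nlinarith
  have key {k : 𝒜} (hk : -algebraMap ℝ 𝒜 ‖h‖ ≤ k) : 0 ≤ a + ε • k :=
    calc (0 : 𝒜) ≤ algebraMap ℝ 𝒜 (r - ε * ‖h‖) := algebraMap_nonneg 𝒜 (sub_nonneg.2 hεr)
      _ = algebraMap ℝ 𝒜 r + ε • -algebraMap ℝ 𝒜 ‖h‖ := by
        simp only [map_sub, Algebra.algebraMap_eq_smul_one]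
        module
      _ ≤ a + ε • k := add_le_add hra (smul_le_smul_of_nonneg_left hk hε.le)
  refine ⟨ε, hε, key hh.neg_algebraMap_norm_le_self, ?_⟩
  simpa [sub_eq_add_neg] using key (neg_le_neg hh.le_algebraMap_norm_self)

open scoped MatrixOrder Matrix.Norms.L2Operator in
lemma exists_pos_posSemidef_of_posDef {κ : Type*} [Finite κ] {D K : Matrix κ κ ℂ} (hD : D.PosDef)
    (hK : K.IsHermitian) :
    ∃ ε : ℝ, 0 < ε ∧ (D + ε • K).PosSemidef ∧ (D - ε • K).PosSemidef := by
  classical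
  cases nonempty_fintype κ
  simpa only [nonneg_iff_posSemidef] using
    exists_pos_nonneg_add_smul_and_nonneg_sub_smul hD.isStrictlyPositive hK

end Perturbation

section HermitianMatrices

variable {ι κ : Type*} [Fintype ι] [Fintype κ]

/-- The real vector space of Hermitian matrices whose kernel contains `S`. -/
def hermitianVanishingOn (S : Submodule ℂ (ι → ℂ)) : Submodule ℝ (Matrix ι ι ℂ) where
  carrier := {H | H.IsHermitian ∧ ∀ x ∈ S, H *ᵥ x = 0}
  zero_mem' := ⟨isHermitian_zero, fun x _ => zero_mulVec x⟩
  add_mem' hG hH := ⟨hG.1.add hH.1, fun x hx => by rw [add_mulVec, hG.2 x hx, hH.2 x hx, add_zero]⟩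
  smul_mem' c H hH := ⟨IsSelfAdjoint.smul (.all c) hH.1,
    fun x hx => by rw [smul_mulVec, hH.2 x hx, smul_zero]⟩

lemma mulVec_eq_zero_iff_of_isHermitian [DecidableEq ι] {A : Matrix ι ι ℂ} (hA : A.IsHermitian)
    (x : ι → ℂ) :
    A *ᵥ x = 0 ↔
      ∀ i, hA.eigenvalues i ≠ 0 → ((hA.eigenvectorUnitary : Matrix ι ι ℂ)ᴴ *ᵥ x) i = 0 := by
  set U : Matrix ι ι ℂ := ↑hA.eigenvectorUnitary
  have hUA : Uᴴ * A = diagonal (fun i => (hA.eigenvalues i : ℂ)) * Uᴴ := by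
    have hdiag := hA.conjStarAlgAut_star_eigenvectorUnitary
    rw [Unitary.conjStarAlgAut_star_apply] at hdiag
    have hUU : U * Uᴴ = 1 := Unitary.coe_mul_star_self hA.eigenvectorUnitary
    calc Uᴴ * A = Uᴴ * A * U * Uᴴ := by rw [Matrix.mul_assoc _ U, hUU, Matrix.mul_one]
      _ = diagonal (fun i => (hA.eigenvalues i : ℂ)) * Uᴴ := congrArg (· * Uᴴ) hdiag
  have hU_inj : Function.Injective Uᴴ.mulVec :=
    mulVec_injective_of_isUnit (Unitary.isUnit_coe (U := star hA.eigenvectorUnitary))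
  rw [← hU_inj.eq_iff, mulVec_zero, mulVec_mulVec, hUA, ← mulVec_mulVec, funext_iff]
  simp [mulVec_diagonal, or_iff_not_imp_left]

lemma exists_isometry_ker_eq {A : Matrix ι ι ℂ} (hA : A.IsHermitian) :
    ∃ W : Matrix ι (Fin A.rank) ℂ, Wᴴ * W = 1 ∧
      LinearMap.ker Wᴴ.mulVecLin = LinearMap.ker A.mulVecLin := by
  classical
  let U : Matrix ι ι ℂ := hA.eigenvectorUnitary
  let e : Fin A.rank ≃ {i // hA.eigenvalues i ≠ 0} :=
    (Fintype.equivFinOfCardEq hA.rank_eq_card_non_zero_eigs.symm).symm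
  refine ⟨U.submatrix id (fun j => (e j : ι)), ?_, ?_⟩
  · have hUU : Uᴴ * U = 1 := Unitary.coe_star_mul_self hA.eigenvectorUnitary
    rw [conjTranspose_submatrix, ← submatrix_mul _ _ _ _ _ Function.bijective_id, hUU]
    exact submatrix_one _ (Subtype.val_injective.comp e.injective)
  · ext x
    rw [LinearMap.mem_ker, LinearMap.mem_ker, mulVecLin_apply, mulVecLin_apply,
      mulVec_eq_zero_iff_of_isHermitian hA, ← Subtype.forall (p := fun i => hA.eigenvalues i ≠ 0)
        (q := fun i => (Uᴴ *ᵥ x) i = 0), e.surjective.forall, funext_iff]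
    rfl

lemma eq_mul_conjTranspose_mul_of_mem_hermitianVanishingOn [DecidableEq κ] {W : Matrix ι κ ℂ}
    (hW : Wᴴ * W = 1) {H : Matrix ι ι ℂ}
    (hH : H ∈ hermitianVanishingOn (LinearMap.ker Wᴴ.mulVecLin)) :
    H = W * (Wᴴ * H * W) * Wᴴ := by
  have hHP : H * (W * Wᴴ) = H := by
    refine mulVec_injective (funext fun x => ?_)
    have hx : Wᴴ *ᵥ (x - (W * Wᴴ) *ᵥ x) = 0 := by
      rw [mulVec_sub, mulVec_mulVec, ← Matrix.mul_assoc, hW, Matrix.one_mul, sub_self]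
    have hHx := hH.2 _ hx
    rw [mulVec_sub, sub_eq_zero, mulVec_mulVec] at hHx
    exact hHx.symm
  have hPH : W * Wᴴ * H = H := by
    simpa [hH.1.eq, Matrix.mul_assoc] using congrArg conjTranspose hHP
  calc H = W * Wᴴ * H * (W * Wᴴ) := by rw [hPH, hHP]
    _ = W * (Wᴴ * H * W) * Wᴴ := by simp only [Matrix.mul_assoc]

lemma mul_mul_conjTranspose_mem_hermitianVanishingOn (W : Matrix ι κ ℂ) {K : Matrix κ κ ℂ}
    (hK : K.IsHermitian) : W * K * Wᴴ ∈ hermitianVanishingOn (LinearMap.ker Wᴴ.mulVecLin) := by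
  refine ⟨isHermitian_mul_mul_conjTranspose W hK, fun x hx => ?_⟩
  rw [← mulVec_mulVec, ← mulVecLin_apply Wᴴ, LinearMap.mem_ker.1 hx, mulVec_zero]

/-- Compression by an isometry `W` identifies the Hermitian matrices vanishing on `ker Wᴴ`, that is
on the orthogonal complement of the range of `W`, with all Hermitian matrices of the smaller
size. -/
def hermitianVanishingOnEquiv [DecidableEq κ] {W : Matrix ι κ ℂ} (hW : Wᴴ * W = 1) :
    hermitianVanishingOn (LinearMap.ker Wᴴ.mulVecLin) ≃ₗ[ℝ]
      selfAdjoint.submodule ℝ (Matrix κ κ ℂ) where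
  toFun H := ⟨Wᴴ * H.1 * W, isHermitian_conjTranspose_mul_mul W H.2.1⟩
  invFun K := ⟨W * K.1 * Wᴴ, mul_mul_conjTranspose_mem_hermitianVanishingOn W K.2⟩
  map_add' G H := by ext1; simp [Matrix.mul_add, Matrix.add_mul]
  map_smul' c H := by ext1; simp
  left_inv H := Subtype.ext (eq_mul_conjTranspose_mul_of_mem_hermitianVanishingOn hW H.2).symm
  right_inv K := Subtype.ext <|
    calc Wᴴ * (W * K.1 * Wᴴ) * W = Wᴴ * W * K.1 * (Wᴴ * W) := by simp only [Matrix.mul_assoc]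
      _ = K.1 := by rw [hW, Matrix.one_mul, Matrix.mul_one]

lemma finrank_hermitianVanishingOn_ker {A : Matrix ι ι ℂ} (hA : A.IsHermitian) :
    Module.finrank ℝ (hermitianVanishingOn (LinearMap.ker A.mulVecLin)) = A.rank ^ 2 := by
  obtain ⟨W, hW, hker⟩ := exists_isometry_ker_eq hA
  rw [← hker, (hermitianVanishingOnEquiv hW).finrank_eq, finrank_selfAdjoint, Module.finrank_matrix]
  simp [sq]

lemma posDef_conjTranspose_mul_mul {A : Matrix ι ι ℂ} (hA : A.PosSemidef) {W : Matrix ι κ ℂ}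
    (hW : ∀ y, A *ᵥ (W *ᵥ y) = 0 → y = 0) : (Wᴴ * A * W).PosDef := by
  refine .of_dotProduct_mulVec_pos (hA.conjTranspose_mul_mul_same W).1 fun y hy => ?_
  refine ((hA.conjTranspose_mul_mul_same W).dotProduct_mulVec_nonneg y).lt_of_ne' fun h => hy ?_
  refine hW y ((hA.dotProduct_mulVec_zero_iff _).1 ?_)
  rw [← h]
  simp [star_mulVec, dotProduct_mulVec, Matrix.mul_assoc]

lemma exists_pos_posSemidef_of_mem_hermitianVanishingOn {A H : Matrix ι ι ℂ} (hA : A.PosSemidef)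
    (hH : H ∈ hermitianVanishingOn (LinearMap.ker A.mulVecLin)) :
    ∃ ε : ℝ, 0 < ε ∧ (A + ε • H).PosSemidef ∧ (A - ε • H).PosSemidef := by
  obtain ⟨W, hW, hker⟩ := exists_isometry_ker_eq hA.1
  have hA_mem : A ∈ hermitianVanishingOn (LinearMap.ker A.mulVecLin) := ⟨hA.1, fun _ hx => hx⟩
  rw [← hker] at hH hA_mem
  have hD : (Wᴴ * A * W).PosDef := posDef_conjTranspose_mul_mul hA fun y hy => by
    have hy' : W *ᵥ y ∈ LinearMap.ker Wᴴ.mulVecLin := hker ▸ hy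
    rwa [LinearMap.mem_ker, mulVecLin_apply, mulVec_mulVec, hW, one_mulVec] at hy'
  obtain ⟨ε, hε, hadd, hsub⟩ :=
    exists_pos_posSemidef_of_posDef hD (isHermitian_conjTranspose_mul_mul W hH.1)
  have hA_eq := eq_mul_conjTranspose_mul_of_mem_hermitianVanishingOn hW hA_mem
  have hH_eq := eq_mul_conjTranspose_mul_of_mem_hermitianVanishingOn hW hH
  refine ⟨ε, hε, ?_, ?_⟩
  · convert hadd.mul_mul_conjTranspose_same W using 1
    rw [Matrix.mul_add, Matrix.add_mul, Matrix.mul_smul, Matrix.smul_mul, ← hA_eq, ← hH_eq]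
  · convert hsub.mul_mul_conjTranspose_same W using 1
    rw [Matrix.mul_sub, Matrix.sub_mul, Matrix.mul_smul, Matrix.smul_mul, ← hA_eq, ← hH_eq]

lemma selfAdjoint_le_span_vecMulVec (ι : Type*) [Finite ι] :
    selfAdjoint.submodule ℝ (Matrix ι ι ℂ) ≤
      Submodule.span ℝ (Set.range fun u : ι → ℂ => vecMulVec u (star u)) := by
  classical
  cases nonempty_fintype ι
  intro X (hX : X.IsHermitian)
  have hX_eq : X = ∑ l, hX.eigenvalues l •
      vecMulVec (hX.eigenvectorBasis l) (star (hX.eigenvectorBasis l)) := by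
    ext i j
    conv_lhs => rw [hX.spectral_theorem, Unitary.conjStarAlgAut_apply, Matrix.mul_apply]
    simp [Matrix.sum_apply, vecMulVec_apply, mul_comm, mul_assoc]
  rw [hX_eq]
  exact sum_mem fun l _ => Submodule.smul_mem _ _ (Submodule.subset_span ⟨_, rfl⟩)

end HermitianMatrices

section Spectrahedron

variable {ι E : Type*} [AddCommGroup E] [Module ℝ E] {L : Matrix ι ι ℂ →ₗ[ℝ] E} {b : E}

/-- The section of the cone of positive semidefinite matrices by the affine subspace `L B = b`. -/
def spectrahedron (L : Matrix ι ι ℂ →ₗ[ℝ] E) (b : E) : Set (Matrix ι ι ℂ) :=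
  {B | B.PosSemidef ∧ L B = b}

lemma convex_spectrahedron (L : Matrix ι ι ℂ →ₗ[ℝ] E) (b : E) : Convex ℝ (spectrahedron L b) := by
  rintro x ⟨hx, hLx⟩ y ⟨hy, hLy⟩ s t hs ht hst
  refine ⟨(hx.smul hs).add (hy.smul ht), ?_⟩
  rw [map_add, map_smul, map_smul, hLx, hLy, ← add_smul, hst, one_smul]

variable [Fintype ι]

lemma add_mulVec_eq_zero_iff_of_posSemidef {A B : Matrix ι ι ℂ} (hA : A.PosSemidef)
    (hB : B.PosSemidef) (x : ι → ℂ) : (A + B) *ᵥ x = 0 ↔ A *ᵥ x = 0 ∧ B *ᵥ x = 0 := by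
  rw [← hA.dotProduct_mulVec_zero_iff, ← hB.dotProduct_mulVec_zero_iff,
    ← (hA.add hB).dotProduct_mulVec_zero_iff, add_mulVec, dotProduct_add,
    add_eq_zero_iff_of_nonneg (hA.dotProduct_mulVec_nonneg x) (hB.dotProduct_mulVec_nonneg x)]

lemma isFace_spectrahedron_inter_hermitianVanishingOn (L : Matrix ι ι ℂ →ₗ[ℝ] E) (b : E)
    (S : Submodule ℂ (ι → ℂ)) :
    IsFace (spectrahedron L b) (spectrahedron L b ∩ hermitianVanishingOn S) := by
  refine ⟨Set.inter_subset_left, (convex_spectrahedron L b).inter (Submodule.convex _), ?_⟩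
  intro x hx y hy t ht0 ht1 hxy
  have h1t : 0 < 1 - t := sub_pos.2 ht1
  have hker (v) (hv : v ∈ S) : x *ᵥ v = 0 ∧ y *ᵥ v = 0 := by
    have hsum := (add_mulVec_eq_zero_iff_of_posSemidef (hx.1.smul ht0.le) (hy.1.smul h1t.le) v).1
      (hxy.2.2 v hv)
    simpa only [smul_mulVec, smul_eq_zero_iff_right ht0.ne', smul_eq_zero_iff_right h1t.ne']
      using hsum
  exact ⟨⟨hx, hx.1.1, fun v hv => (hker v hv).1⟩, ⟨hy, hy.1.1, fun v hv => (hker v hv).2⟩⟩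

theorem vectorSpan_faceGen_spectrahedron {A : Matrix ι ι ℂ} (hA : A ∈ spectrahedron L b) :
    vectorSpan ℝ (faceGen (spectrahedron L b) A) =
      hermitianVanishingOn (LinearMap.ker A.mulVecLin) ⊓ LinearMap.ker L := by
  refine le_antisymm (Submodule.span_le.2 ?_) ?_
  · have hsub := faceGen_subset (isFace_spectrahedron_inter_hermitianVanishingOn L b
      (LinearMap.ker A.mulVecLin)) ⟨hA, hA.1.1, fun _ hx => hx⟩
    rintro _ ⟨x, hx, y, hy, rfl⟩
    obtain ⟨⟨-, hLx⟩, hx⟩ := hsub hx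
    obtain ⟨⟨-, hLy⟩, hy⟩ := hsub hy
    exact ⟨sub_mem hx hy, by simp [hLx, hLy]⟩
  · rintro H ⟨hH, hLH⟩
    rw [SetLike.mem_coe, LinearMap.mem_ker] at hLH
    obtain ⟨ε, hε, hadd, hsub⟩ := exists_pos_posSemidef_of_mem_hermitianVanishingOn hA.1 hH
    exact mem_vectorSpan_faceGen hε.ne' ⟨hadd, by simp [hA.2, hLH]⟩ ⟨hsub, by simp [hA.2, hLH]⟩

theorem faceDim_faceGen_spectrahedron_add {A : Matrix ι ι ℂ} (hA : A ∈ spectrahedron L b) :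
    faceDim (faceGen (spectrahedron L b) A) +
        Module.finrank ℝ ((hermitianVanishingOn (LinearMap.ker A.mulVecLin)).map L) =
      A.rank ^ 2 := by
  rw [faceDim, vectorSpan_faceGen_spectrahedron hA, add_comm, finrank_map_add_finrank_inf_ker,
    finrank_hermitianVanishingOn_ker hA.1.1]

end Spectrahedron

section PartialTrace

variable {ι κ : Type*} [Fintype κ]

/-- The partial trace over the second tensor factor: the `(i, j)` entry of `partialTrace H` is the
trace of the `(i, j)` block of `H`. -/
def partialTrace : Matrix (ι × κ) (ι × κ) ℂ →ₗ[ℝ] Matrix ι ι ℂ where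
  toFun H := of fun i j => ∑ k, H (i, k) (j, k)
  map_add' G H := by ext; simp [Finset.sum_add_distrib]
  map_smul' c H := by ext; simp [Finset.mul_sum]

lemma partialTrace_apply (H : Matrix (ι × κ) (ι × κ) ℂ) (i j : ι) :
    partialTrace H i j = ∑ k, H (i, k) (j, k) :=
  rfl

lemma isHermitian_partialTrace {H : Matrix (ι × κ) (ι × κ) ℂ} (hH : H.IsHermitian) :
    (partialTrace H).IsHermitian := by
  ext i j
  simp only [conjTranspose_apply, partialTrace_apply, star_sum, hH.apply]

/-- The elementary tensor `u ⊗ y` of two coordinate vectors. -/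
def tensorVec (u : ι → ℂ) (y : κ → ℂ) : ι × κ → ℂ :=
  fun p => u p.1 * y p.2

lemma partialTrace_vecMulVec_tensorVec (u : ι → ℂ) (y : κ → ℂ) :
    partialTrace (vecMulVec (tensorVec u y) (star (tensorVec u y))) =
      (∑ k, Complex.normSq (y k)) • vecMulVec u (star u) := by
  ext i j
  simp only [partialTrace_apply, vecMulVec_apply, tensorVec, Pi.star_apply, star_mul',
    Matrix.smul_apply, Complex.real_smul, Complex.ofReal_sum, Complex.normSq_eq_conj_mul_self,
    Finset.sum_mul]
  exact Finset.sum_congr rfl fun k _ => by simp only [starRingEnd_apply]; ring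

variable [Fintype ι]

lemma exists_tensorVec_orthogonal {S : Submodule ℂ (ι × κ → ℂ)}
    (hS : Module.finrank ℂ S < Fintype.card κ) (u : ι → ℂ) :
    ∃ y : κ → ℂ, y ≠ 0 ∧ ∀ x ∈ S, star (tensorVec u y) ⬝ᵥ x = 0 := by
  let f : (κ → ℂ) →ₗ[ℂ] Module.Dual ℂ S :=
    LinearMap.mk₂ ℂ (fun z x => tensorVec (star u) z ⬝ᵥ x)
      (fun z z' x => by simp [tensorVec, dotProduct, mul_add, add_mul, Finset.sum_add_distrib])
      (fun c z x => by simp [tensorVec, dotProduct, Finset.mul_sum, mul_assoc, mul_left_comm])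
      (fun z x x' => by simp [dotProduct_add])
      (fun c z x => by simp [dotProduct_smul])
  have hker : LinearMap.ker f ≠ ⊥ := LinearMap.ker_ne_bot_of_finrank_lt <| by
    rwa [Subspace.dual_finrank_eq, Module.finrank_fintype_fun_eq_card]
  obtain ⟨z, hz, hz0⟩ := Submodule.exists_mem_ne_zero_of_ne_bot hker
  refine ⟨star z, star_ne_zero.2 hz0, fun x hx => ?_⟩
  have hfz : f z ⟨x, hx⟩ = 0 := by rw [LinearMap.mem_ker.1 hz, LinearMap.zero_apply]
  have hstar : star (tensorVec u (star z)) = tensorVec (star u) z := by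
    ext p
    simp [tensorVec]
  rw [hstar]
  exact hfz

lemma vecMulVec_self_star_mem_map_partialTrace {S : Submodule ℂ (ι × κ → ℂ)}
    (hS : Module.finrank ℂ S < Fintype.card κ) (u : ι → ℂ) :
    vecMulVec u (star u) ∈ (hermitianVanishingOn S).map partialTrace := by
  obtain ⟨y, hy0, hy⟩ := exists_tensorVec_orthogonal hS u
  have hnorm : ∑ k, Complex.normSq (y k) ≠ 0 := by
    rw [Ne, Finset.sum_eq_zero_iff_of_nonneg fun k _ => Complex.normSq_nonneg _]
    exact fun h => hy0 (funext fun k => Complex.normSq_eq_zero.1 (h k (Finset.mem_univ k)))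
  refine (Submodule.smul_mem_iff _ hnorm).1 ⟨_, ⟨?_, fun x hx => ?_⟩,
    partialTrace_vecMulVec_tensorVec u y⟩
  · exact (posSemidef_vecMulVec_self_star _).1
  · rw [vecMulVec_mulVec, hy x hx]
    simp

lemma map_partialTrace_hermitianVanishingOn {S : Submodule ℂ (ι × κ → ℂ)}
    (hS : Module.finrank ℂ S < Fintype.card κ) :
    (hermitianVanishingOn S).map partialTrace = selfAdjoint.submodule ℝ (Matrix ι ι ℂ) := by
  refine le_antisymm ?_ ((selfAdjoint_le_span_vecMulVec ι).trans (Submodule.span_le.2 ?_))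
  · rintro _ ⟨H, hH, rfl⟩
    exact isHermitian_partialTrace hH.1
  · rintro _ ⟨u, rfl⟩
    exact vecMulVec_self_star_mem_map_partialTrace hS u

lemma Cset_eq_spectrahedron (n : ℕ) : Cset n = spectrahedron partialTrace 1 := by
  ext B
  refine and_congr_right fun _ => ?_
  rw [← Matrix.ext_iff]
  rfl

end PartialTrace

theorem faceDim_of_rank_eq_general {ι κ : Type*} [Fintype ι] [Fintype κ] {X : Matrix ι ι ℂ}
    {A : Matrix (ι × κ) (ι × κ) ℂ} (hA : A ∈ spectrahedron partialTrace X)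
    (hrank : Fintype.card ι * Fintype.card κ < A.rank + Fintype.card κ) :
    faceDim (faceGen (spectrahedron partialTrace X) A) + Fintype.card ι ^ 2 = A.rank ^ 2 := by
  have hker : Module.finrank ℂ (LinearMap.ker A.mulVecLin) < Fintype.card κ := by
    have rank_nullity := LinearMap.finrank_range_add_finrank_ker A.mulVecLin
    rw [Module.finrank_fintype_fun_eq_card, Fintype.card_prod] at rank_nullity
    change A.rank + _ = _ at rank_nullity
    lia
  rw [← faceDim_faceGen_spectrahedron_add hA, map_partialTrace_hermitianVanishingOn hker,
    finrank_selfAdjoint, Module.finrank_matrix, Module.finrank_self, mul_one, sq]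

/-- If `n ≥ 2` and `A ∈ C_n` has rank `n² - 1`, then the face of `C_n` generated by
`A` has dimension exactly `n⁴ - 3n² + 1`. -/
theorem faceDim_of_rank_eq (n : ℕ) (hn : 2 ≤ n)
    (A : Matrix (Fin n × Fin n) (Fin n × Fin n) ℂ)
    (hA : A ∈ Cset n) (hrank : A.rank = n ^ 2 - 1) :
    faceDim (faceGen (Cset n) A) = n ^ 4 - 3 * n ^ 2 + 1 := by
  rw [Cset_eq_spectrahedron] at hA ⊢
  have hn2 : 4 ≤ n ^ 2 := Nat.pow_le_pow_left hn 2
  have hdim := faceDim_of_rank_eq_general hA (by simp only [Fintype.card_fin, hrank, ← sq]; lia)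
  rw [hrank, Fintype.card_fin] at hdim
  have hle : 3 * n ^ 2 ≤ n ^ 4 := by nlinarith
  have hexpand : (n ^ 2 - 1) ^ 2 + 2 * n ^ 2 = n ^ 4 + 1 := by
    zify [show 1 ≤ n ^ 2 by lia]
    ring
  lia
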